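/- arXiv:2206.02653 — 2 statements merged into one kernel-verified Lean document; each statement's English description precedes it below -/
import Mathlib

section
/- Let M be a hierarchical MDP with target states T that has optimal local subpolicies, and let macro(M) be the corresponding macro-MDP. Then the maximal expected reward to reach T in macro(M) equals the maximal expected reward to reach T in M: maxER_{macro(M)}(◊T) = maxER_M(◊T). -/
/-!
Fix a policy `σ` of `H` that plays the locally optimal policies `σs` on every nontrivial
partition; these are exactly the policies of the restricted MDP, and up to the irrelevant
choices inside partitions exactly the policies of the macro-MDP. Since the local policies
preserve the maximum by hypothesis, it suffices that each such `σ` has the same expected reward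
from the initial state in `H` and in the macro-MDP (`HMDP.macro_ER_init`).

In a finite chain that hits its target almost surely, the expected reward is finite
(`bddAbove_erN`) and is the unique solution of its Bellman equation (`expRew_eq`,
`solution_unique`), because the `n`-step survival probabilities tend to `0`. Applied to a subMDP,
uniqueness shows that any solution of the Bellman equation on a partition equals the reward
collected inside the partition plus the values at the exits weighted by the exit probabilities
(`HMDP.sub_decompose`).

Almost sure hitting is assumed for `H` and for the subMDPs but not for the macro-MDP, so the
comparison takes two steps. The value of `σ` in `H`, read off at partition entries, solves the
macro Bellman equation (`HMDP.collapse_solves_macro`); being a nonnegative solution it bounds the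
truncated macro rewards, so the macro value is finite and solves that equation too. Conversely the
macro value, extended to the interior of the partitions through the subMDPs, solves the Bellman
equation of `H`, and uniqueness in `H` identifies it with the value of `σ`.
-/

open scoped BigOperators
open scoped Classical

/-- A (finite) Markov decision process: states `S`, actions `A`, an initial state,
transition probabilities, state rewards, and a set of target states. -/
structure MDP (S A : Type) [Fintype S] [Fintype A] where
  init : S
  P : S → A → S → ℝ
  r : S → ℝ
  target : Set S

namespace MDP

variable {S A : Type} [Fintype S] [Fintype A]

/-- Well-formedness of an MDP: transition probabilities are nonnegative, every
action row sums to `0` or `1`, and rewards are nonnegative. -/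
def IsMDP (M : MDP S A) : Prop :=
  (∀ s a t, 0 ≤ M.P s a t) ∧
  (∀ s a, (∑ t, M.P s a t) = 0 ∨ (∑ t, M.P s a t) = 1) ∧
  (∀ s, 0 ≤ M.r s)

/-- Probability that the Markov chain with kernel `step`, started in `s`,
first visits the set `T` at time `n`. -/
noncomputable def hitAt (step : S → S → ℝ) (T : Set S) : ℕ → S → ℝ
  | 0, s => if s ∈ T then 1 else 0
  | n + 1, s => if s ∈ T then 0 else ∑ t, step s t * hitAt step T n t

/-- Probability of eventually reaching `T` from `s` in the Markov chain `step`. -/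
noncomputable def reach (step : S → S → ℝ) (T : Set S) (s : S) : ℝ :=
  ∑' n, hitAt step T n s

/-- `n`-step truncation of the expected reward accumulated strictly before reaching `T`. -/
noncomputable def erN (step : S → S → ℝ) (rew : S → ℝ) (T : Set S) : ℕ → S → ℝ
  | 0, _ => 0
  | n + 1, s => if s ∈ T then 0 else rew s + ∑ t, step s t * erN step rew T n t

/-- Expected reward accumulated until reaching `T` (supremum of the truncations). -/
noncomputable def expRew (step : S → S → ℝ) (rew : S → ℝ) (T : Set S) (s : S) : ℝ :=
  ⨆ n, erN step rew T n s

/-- The kernel of the Markov chain induced by a memoryless policy `σ`. -/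
def stepOf (M : MDP S A) (σ : S → A) : S → S → ℝ := fun s t => M.P s (σ s) t

/-- A memoryless policy selects an enabled action in every state. -/
def IsPolicy (M : MDP S A) (σ : S → A) : Prop := ∀ s, (∑ t, M.P s (σ s) t) ≠ 0

/-- `Pr_{M[σ]}(s → ◊U)`. -/
noncomputable def PrR (M : MDP S A) (σ : S → A) (U : Set S) (s : S) : ℝ :=
  reach (M.stepOf σ) U s

/-- `ER_{M[σ]}(s → ◊T)` where `T` is the target set of `M`. -/
noncomputable def ER (M : MDP S A) (σ : S → A) (s : S) : ℝ :=
  expRew (M.stepOf σ) M.r M.target s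

/-- `maxER_M(s → ◊T)`: the maximal expected reward over memoryless policies. -/
noncomputable def maxER (M : MDP S A) (s : S) : ℝ :=
  ⨆ σ : { σ : S → A // M.IsPolicy σ }, M.ER σ.1 s

/-- `maxER_M(◊T)` from the initial state. -/
noncomputable def value (M : MDP S A) : ℝ := M.maxER M.init

/-- `M[τ]` for a partial policy `τ : S ⇸ A`: where `τ` is defined, only the chosen
action remains enabled; elsewhere `M` is unchanged. -/
noncomputable def restrict (M : MDP S A) (τ : S → Option A) : MDP S A :=
  { M with
    P := fun s a t =>
      match τ s with
      | some b => if a = b then M.P s a t else 0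
      | none => M.P s a t }

end MDP
/-- A hierarchical MDP: an MDP together with (pairwise disjoint, nontrivial)
partitions `part i`, their entry states, and an enumeration `suc i` of the
(at most `Y`) successor states of each partition.  States outside every
`part i` are the trivial partitions. -/
structure HMDP (S A ι : Type) (Y : ℕ) [Fintype S] [Fintype A] [Fintype ι]
    extends MDP S A where
  part : ι → Finset S
  entry : ι → S
  suc : ι → Fin Y → S

namespace HMDP

variable {S A ι : Type} {Y : ℕ} [Fintype S] [Fintype A] [Fintype ι]

/-- The successor states `succ(S_i) \ S_i` of partition `i`. -/
def succSet (H : HMDP S A ι Y) (i : ι) : Set S :=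
  { t | t ∉ H.part i ∧ ∃ s ∈ H.part i, ∃ a, H.P s a t ≠ 0 }

/-- The hierarchical-MDP conditions: the partitions are pairwise disjoint and
nontrivial; `entry i` belongs to `part i` and is the initial state or has a
predecessor outside `part i`; every other state of `part i` is not the initial
state and has all its predecessors inside `part i`; `suc i` injectively
enumerates (a superset of) the successor states of `part i`, all of them lying
outside `part i`; and target states are trivial states. -/
def IsHMDP (H : HMDP S A ι Y) : Prop :=
  (∀ i j, i ≠ j → Disjoint (H.part i) (H.part j)) ∧
  (∀ i, 2 ≤ (H.part i).card) ∧
  (∀ i, H.entry i ∈ H.part i) ∧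
  (∀ i, H.entry i = H.init ∨ ∃ s a, s ∉ H.part i ∧ H.P s a (H.entry i) ≠ 0) ∧
  (∀ i, ∀ s ∈ H.part i, s ≠ H.entry i →
    s ≠ H.init ∧ ∀ s' a, H.P s' a s ≠ 0 → s' ∈ H.part i) ∧
  (∀ i, Function.Injective (H.suc i) ∧ (∀ j, H.suc i j ∉ H.part i) ∧
    ∀ t ∈ H.succSet i, ∃ j, H.suc i j = t) ∧
  (∀ i, ∀ s ∈ H.part i, s ∉ H.target)

/-- The subMDP `M_i` of partition `i`: its states are the states of `H` plus a
fresh bottom state `none`; inside `part i` the original transitions and rewards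
are kept, every state outside `part i` moves with probability 1 to the
(absorbing) bottom state via the fresh action `none` and has reward `0`;
the target is the bottom state. -/
noncomputable def subMDP (H : HMDP S A ι Y) (i : ι) : MDP (Option S) (Option A) where
  init := some (H.entry i)
  P := fun s a t =>
    match s, a, t with
    | some s, some a, some t => if s ∈ H.part i then H.P s a t else 0
    | some s, none, none => if s ∈ H.part i then 0 else 1
    | none, none, none => 1
    | _, _, _ => 0
  r := fun s =>
    match s with
    | some s => if s ∈ H.part i then H.r s else 0
    | none => 0
  target := {none}

/-- `res_i(j)` for `j < Y`: the probability, under the policy `σs i` of the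
subMDP `M_i`, of reaching the `j`-th successor state of partition `i`. -/
noncomputable def resP (H : HMDP S A ι Y) (σs : ι → Option S → Option A)
    (i : ι) (j : Fin Y) : ℝ :=
  (H.subMDP i).PrR (σs i) {some (H.suc i j)} (some (H.entry i))

/-- `res_i(Y) = maxER_{M_i}(◊{⊥})`. -/
noncomputable def resE (H : HMDP S A ι Y) (i : ι) : ℝ :=
  (H.subMDP i).maxER (some (H.entry i))

/-- The result vector `res_i ∈ ℝ^{Y+1}` of subMDP `M_i` (Def. 7). -/
noncomputable def res (H : HMDP S A ι Y) (σs : ι → Option S → Option A) (i : ι) :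
    Fin (Y + 1) → ℝ :=
  fun j => if h : (j : ℕ) < Y then H.resP σs i ⟨j, h⟩ else H.resE i

/-- The family `σs` consists of (locally) optimal policies of the subMDPs. -/
def LocallyOptimal (H : HMDP S A ι Y) (σs : ι → Option S → Option A) : Prop :=
  ∀ i, (H.subMDP i).IsPolicy (σs i) ∧
    (H.subMDP i).ER (σs i) (some (H.entry i)) = (H.subMDP i).maxER (some (H.entry i))

/-- The partial policy `⊔_𝕀 σ_i` on `H` induced by subMDP policies `σs`. -/
noncomputable def liftPolicy (H : HMDP S A ι Y) (σs : ι → Option S → Option A) :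
    S → Option A :=
  fun s => if h : ∃ i, s ∈ H.part i then σs h.choose (some s) else none

/-- `H` has optimal local subpolicies: applying any family of locally optimal
subMDP policies as a partial policy preserves the maximal expected reward. -/
def HasOptimalLocalSubpolicies (H : HMDP S A ι Y) : Prop :=
  ∀ σs, H.LocallyOptimal σs →
    (H.toMDP.restrict (H.liftPolicy σs)).maxER H.init = H.toMDP.maxER H.init

/-- The macro-MDP of `H` (Def. 6), induced by fixed optimal subMDP policies `σs`:
at states of nontrivial partitions the transition probabilities are the subMDP
reachability probabilities of the successor states and the reward is the
maximal expected subMDP reward; trivial states keep their transitions and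
rewards.  (Non-entry states of nontrivial partitions are unreachable.) -/
noncomputable def macroMDP (H : HMDP S A ι Y) (σs : ι → Option S → Option A) :
    MDP S A where
  init := H.init
  P := fun s a t =>
    if h : ∃ i, s ∈ H.part i then
      ∑ j, if t = H.suc h.choose j then H.resP σs h.choose j else 0
    else H.P s a t
  r := fun s => if h : ∃ i, s ∈ H.part i then H.resE h.choose else H.r s
  target := H.target

end HMDP

/-! ### Finite Markov chains -/

section Chain

variable {X : Type} [Fintype X] {K : X → X → ℝ} {T : Set X} {rew : X → ℝ}

/-- The one-step operator of the chain `K` killed on `T`: the value at `s` is the expectation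
of `f` after one step, and `0` if `s` already lies in `T`. -/
noncomputable def killedOp (K : X → X → ℝ) (T : Set X) : (X → ℝ) →ₗ[ℝ] (X → ℝ) where
  toFun f s := if s ∈ T then 0 else ∑ t, K s t * f t
  map_add' f g := by
    funext s
    by_cases h : s ∈ T <;> simp [h, mul_add, Finset.sum_add_distrib]
  map_smul' c f := by
    funext s
    by_cases h : s ∈ T <;> simp [h, Finset.mul_sum, mul_left_comm]

theorem killedOp_apply (f : X → ℝ) (s : X) :
    killedOp K T f s = if s ∈ T then 0 else ∑ t, K s t * f t := rfl

theorem killedOp_mono (hK : ∀ s t, 0 ≤ K s t) {f g : X → ℝ} (h : ∀ s, f s ≤ g s) (s : X) :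
    killedOp K T f s ≤ killedOp K T g s := by
  rw [killedOp_apply, killedOp_apply]
  split_ifs
  · exact le_rfl
  · exact Finset.sum_le_sum fun t _ => mul_le_mul_of_nonneg_left (h t) (hK s t)

theorem killedOp_pow_succ (n : ℕ) (f : X → ℝ) :
    (killedOp K T ^ (n + 1)) f = killedOp K T ((killedOp K T ^ n) f) := by
  rw [pow_succ', Module.End.mul_apply]

theorem killedOp_pow_mono (hK : ∀ s t, 0 ≤ K s t) {f g : X → ℝ} (h : ∀ s, f s ≤ g s)
    (n : ℕ) : ∀ s, (killedOp K T ^ n) f s ≤ (killedOp K T ^ n) g s := by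
  induction n with
  | zero => simpa using h
  | succ n ih =>
    intro s
    rw [killedOp_pow_succ, killedOp_pow_succ]
    exact killedOp_mono hK ih s

theorem killedOp_pow_nonneg (hK : ∀ s t, 0 ≤ K s t) {f : X → ℝ} (h : ∀ s, 0 ≤ f s)
    (n : ℕ) (s : X) : 0 ≤ (killedOp K T ^ n) f s := by
  simpa using killedOp_pow_mono (T := T) hK (f := 0) h n s

theorem hitAt_eq_pow (n : ℕ) :
    MDP.hitAt K T n = (killedOp K T ^ n) (fun s => if s ∈ T then 1 else 0) := by
  induction n with
  | zero => funext s; simp [MDP.hitAt]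
  | succ n ih =>
    rw [killedOp_pow_succ, ← ih]
    funext s
    simp [MDP.hitAt, killedOp_apply]

/-- Either the chain has hit `T` before time `n`, or it survives `n` killed steps. -/
theorem sum_hitAt_add_survive (hrow : ∀ s, ∑ t, K s t = 1) (n : ℕ) (s : X) :
    ∑ k ∈ Finset.range n, MDP.hitAt K T k s + (killedOp K T ^ n) 1 s = 1 := by
  induction n with
  | zero => simp
  | succ n ih =>
    have h1 : killedOp K T 1 = 1 - fun s => if s ∈ T then (1 : ℝ) else 0 := by
      funext s
      by_cases h : s ∈ T <;> simp [killedOp_apply, h, hrow]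
    have h2 : (killedOp K T ^ (n + 1)) 1 = (killedOp K T ^ n) 1 - MDP.hitAt K T n := by
      rw [pow_succ, Module.End.mul_apply, h1, map_sub, ← hitAt_eq_pow]
    rw [h2, Finset.sum_range_succ, Pi.sub_apply]
    linarith

theorem hitAt_nonneg (hK : ∀ s t, 0 ≤ K s t) (n : ℕ) (s : X) : 0 ≤ MDP.hitAt K T n s := by
  rw [hitAt_eq_pow]
  exact killedOp_pow_nonneg hK (fun s => by split_ifs <;> norm_num) n s

theorem reach_nonneg (hK : ∀ s t, 0 ≤ K s t) (s : X) : 0 ≤ MDP.reach K T s :=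
  tsum_nonneg fun n => hitAt_nonneg hK n s

theorem summable_hitAt (hK : ∀ s t, 0 ≤ K s t) (hrow : ∀ s, ∑ t, K s t = 1) (s : X) :
    Summable fun n => MDP.hitAt K T n s := by
  refine summable_of_sum_range_le (c := 1) (fun n => hitAt_nonneg hK n s) fun n => ?_
  have h := sum_hitAt_add_survive (T := T) hrow n s
  have := killedOp_pow_nonneg (T := T) hK (f := 1) (fun _ => zero_le_one) n s
  linarith

theorem reach_of_mem {s : X} (hs : s ∈ T) : MDP.reach K T s = 1 := by
  have : (fun n => MDP.hitAt K T n s) = fun n => if n = 0 then 1 else 0 := by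
    funext n
    cases n <;> simp [MDP.hitAt, hs]
  simp [MDP.reach, this]

theorem reach_of_notMem (hK : ∀ s t, 0 ≤ K s t) (hrow : ∀ s, ∑ t, K s t = 1) {s : X}
    (hs : s ∉ T) : MDP.reach K T s = ∑ t, K s t * MDP.reach K T t := by
  unfold MDP.reach
  rw [(summable_hitAt hK hrow s).tsum_eq_zero_add]
  simp only [MDP.hitAt, hs, if_false, zero_add]
  rw [Summable.tsum_finsetSum fun t _ => (summable_hitAt hK hrow t).mul_left _]
  simp only [tsum_mul_left]

theorem tendsto_survive (hrow : ∀ s, ∑ t, K s t = 1) (hT : ∀ s, MDP.reach K T s = 1) (s : X) :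
    Filter.Tendsto (fun n => (killedOp K T ^ n) 1 s) Filter.atTop (nhds 0) := by
  -- a non-summable family would have the junk sum `0`, not `1`
  have hs : Summable fun n => MDP.hitAt K T n s := by
    by_contra h
    have := hT s
    rw [MDP.reach, tsum_eq_zero_of_not_summable h] at this
    norm_num at this
  have h1 := hs.hasSum.tendsto_sum_nat
  rw [show ∑' n, MDP.hitAt K T n s = 1 from hT s] at h1
  have h2 := h1.const_sub 1
  rw [sub_self] at h2
  refine h2.congr fun n => ?_
  linarith [sum_hitAt_add_survive (T := T) hrow n s]

theorem exists_forall_le (f : X → ℝ) : ∃ B, 0 ≤ B ∧ ∀ s, f s ≤ B :=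
  ⟨∑ t, |f t|, Finset.sum_nonneg fun _ _ => abs_nonneg _, fun s =>
    (le_abs_self _).trans
      (Finset.single_le_sum (f := fun t => |f t|) (fun _ _ => abs_nonneg _) (Finset.mem_univ s))⟩

/-- If the target is hit almost surely, the only fixed point of the killed operator is `0`. -/
theorem eq_zero_of_killedOp_fixed (hK : ∀ s t, 0 ≤ K s t) (hrow : ∀ s, ∑ t, K s t = 1)
    (hT : ∀ s, MDP.reach K T s = 1) {D : X → ℝ} (hD : killedOp K T D = D) : D = 0 := by
  have key : ∀ E : X → ℝ, killedOp K T E = E → ∀ s, E s ≤ 0 := by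
    intro E hE s
    obtain ⟨B, -, hB⟩ := exists_forall_le E
    have hfix : ∀ n : ℕ, (killedOp K T ^ n) E = E := by
      intro n
      induction n with
      | zero => simp
      | succ n ih => rw [killedOp_pow_succ, ih, hE]
    have hle : ∀ n : ℕ, E s ≤ B * (killedOp K T ^ n) 1 s := by
      intro n
      have h := killedOp_pow_mono (T := T) hK (f := E) (g := B • (1 : X → ℝ))
        (fun t => by simpa using hB t) n s
      rw [hfix, map_smul] at h
      simpa using h
    have hl := (tendsto_survive hrow hT s).const_mul B
    rw [mul_zero] at hl
    exact ge_of_tendsto' hl hle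
  funext s
  have h1 := key D hD s
  have h2 := key (-D) (by rw [map_neg, hD]) s
  simp only [Pi.neg_apply] at h2
  simp only [Pi.zero_apply]
  linarith

theorem erN_succ (n : ℕ) (s : X) :
    MDP.erN K rew T (n + 1) s = (if s ∈ T then 0 else rew s)
      + killedOp K T (MDP.erN K rew T n) s := by
  by_cases h : s ∈ T <;> simp [MDP.erN, killedOp_apply, h]

theorem erN_mono (hK : ∀ s t, 0 ≤ K s t) (hr : ∀ s, 0 ≤ rew s) (s : X) :
    Monotone fun n => MDP.erN K rew T n s := by
  have h : ∀ n s, MDP.erN K rew T n s ≤ MDP.erN K rew T (n + 1) s := by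
    intro n
    induction n with
    | zero =>
      intro s
      by_cases h : s ∈ T <;> simp [MDP.erN, h, hr]
    | succ n ih =>
      intro s
      rw [erN_succ, erN_succ (n + 1)]
      exact add_le_add le_rfl (killedOp_mono hK ih s)
  exact monotone_nat_of_le_succ fun n => h n s

theorem erN_nonneg (hK : ∀ s t, 0 ≤ K s t) (hr : ∀ s, 0 ≤ rew s) (n : ℕ) (s : X) :
    0 ≤ MDP.erN K rew T n s :=
  erN_mono hK hr s (Nat.zero_le n)

theorem expRew_nonneg (hK : ∀ s t, 0 ≤ K s t) (hr : ∀ s, 0 ≤ rew s) (s : X) :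
    0 ≤ MDP.expRew K rew T s :=
  Real.iSup_nonneg fun n => erN_nonneg hK hr n s

/-- Splitting the accumulated reward at time `m`. -/
theorem erN_add (m n : ℕ) (s : X) :
    MDP.erN K rew T (m + n) s
      = MDP.erN K rew T m s + (killedOp K T ^ m) (MDP.erN K rew T n) s := by
  induction m generalizing s with
  | zero => simp [MDP.erN]
  | succ m ih =>
    have ih' : MDP.erN K rew T (m + n)
        = MDP.erN K rew T m + (killedOp K T ^ m) (MDP.erN K rew T n) := funext ih
    rw [show m + 1 + n = (m + n) + 1 by ring, erN_succ, ih', map_add, erN_succ,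
      killedOp_pow_succ, Pi.add_apply, add_assoc]

/-- If the target is hit almost surely, the truncated expected rewards are bounded: after a
time `m` at which every survival probability is at most `1/2`, the maximum `B` of the `n`-step
reward satisfies `B ≤ C + B / 2`, where `C` bounds the `m`-step reward. -/
theorem bddAbove_erN (hK : ∀ s t, 0 ≤ K s t) (hrow : ∀ s, ∑ t, K s t = 1)
    (hr : ∀ s, 0 ≤ rew s) (hT : ∀ s, MDP.reach K T s = 1) (s : X) :
    BddAbove (Set.range fun n => MDP.erN K rew T n s) := by
  have hev : ∀ᶠ m in Filter.atTop, ∀ s, (killedOp K T ^ m) 1 s ≤ 1 / 2 :=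
    Filter.eventually_all.2 fun s =>
      (tendsto_survive hrow hT s).eventually (ge_mem_nhds (by norm_num))
  obtain ⟨m, hm⟩ := hev.exists
  obtain ⟨C, hC0, hC⟩ := exists_forall_le (MDP.erN K rew T m)
  refine ⟨2 * C, ?_⟩
  rintro _ ⟨n, rfl⟩
  have : Nonempty X := ⟨s⟩
  obtain ⟨z, hz⟩ := Finite.exists_max (MDP.erN K rew T n)
  have hz0 : 0 ≤ MDP.erN K rew T n z := erN_nonneg hK hr n z
  have h1 : MDP.erN K rew T n z ≤ MDP.erN K rew T (m + n) z :=
    erN_mono hK hr z (Nat.le_add_left n m)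
  have h2 := killedOp_pow_mono (T := T) hK (f := MDP.erN K rew T n)
    (g := MDP.erN K rew T n z • (1 : X → ℝ)) (fun t => by simpa using hz t) m z
  rw [map_smul, Pi.smul_apply, smul_eq_mul] at h2
  rw [erN_add] at h1
  have h3 := mul_le_mul_of_nonneg_left (hm z) hz0
  have h4 := hz s
  have h5 := hC z
  show MDP.erN K rew T n s ≤ 2 * C
  linarith

/-- The Bellman equation for the expected reward. -/
theorem expRew_eq (hK : ∀ s t, 0 ≤ K s t) (hr : ∀ s, 0 ≤ rew s)
    (hb : ∀ s, BddAbove (Set.range fun n => MDP.erN K rew T n s)) (s : X) :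
    MDP.expRew K rew T s
      = if s ∈ T then 0 else rew s + ∑ t, K s t * MDP.expRew K rew T t := by
  have hlim : ∀ s, Filter.Tendsto (fun n => MDP.erN K rew T n s) Filter.atTop
      (nhds (MDP.expRew K rew T s)) := fun s => tendsto_atTop_ciSup (erN_mono hK hr s) (hb s)
  have h1 := (hlim s).comp (Filter.tendsto_add_atTop_nat 1)
  refine tendsto_nhds_unique h1 ?_
  by_cases h : s ∈ T
  · simp only [Function.comp_def, MDP.erN, h, if_true]
    exact tendsto_const_nhds
  · simp only [Function.comp_def, MDP.erN, h, if_false]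
    exact (tendsto_finsetSum _ fun t _ => (hlim t).const_mul _).const_add _

/-- Any nonnegative solution of the Bellman equation bounds the truncated rewards. -/
theorem erN_le_of_solution (hK : ∀ s t, 0 ≤ K s t) {f : X → ℝ} (hf0 : ∀ s, 0 ≤ f s)
    (hf : ∀ s, s ∉ T → f s = rew s + ∑ t, K s t * f t) (n : ℕ) :
    ∀ s, MDP.erN K rew T n s ≤ f s := by
  induction n with
  | zero => exact hf0
  | succ n ih =>
    intro s
    by_cases h : s ∈ T
    · simpa [MDP.erN, h] using hf0 s
    · rw [hf s h]
      simp only [MDP.erN, h, if_false]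
      gcongr with t
      · exact hK s t
      · exact ih t

/-- If the target is hit almost surely, the Bellman equation has at most one solution. -/
theorem solution_unique (hK : ∀ s t, 0 ≤ K s t) (hrow : ∀ s, ∑ t, K s t = 1)
    (hT : ∀ s, MDP.reach K T s = 1) {f g : X → ℝ}
    (hf : ∀ s, f s = if s ∈ T then 0 else rew s + ∑ t, K s t * f t)
    (hg : ∀ s, g s = if s ∈ T then 0 else rew s + ∑ t, K s t * g t) : f = g := by
  refine sub_eq_zero.1 (eq_zero_of_killedOp_fixed hK hrow hT ?_)
  funext s
  rw [map_sub, Pi.sub_apply, Pi.sub_apply, hf s, hg s, killedOp_apply, killedOp_apply]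
  split_ifs <;> ring

end Chain

/-! ### The subMDP of a partition -/

namespace HMDP

variable {S A ι : Type} {Y : ℕ} [Fintype S] [Fintype A] [Fintype ι]
variable {H : HMDP S A ι Y} {σs : ι → Option S → Option A} {i : ι}

theorem sub_action_in (hσ : (H.subMDP i).IsPolicy (σs i)) {s : S} (hs : s ∈ H.part i) :
    ∃ a, σs i (some s) = some a ∧ ∑ t, H.P s a t ≠ 0 := by
  have h := hσ (some s)
  cases ha : σs i (some s) with
  | none => simp [ha, Fintype.sum_option, subMDP, hs] at h
  | some a =>
    refine ⟨a, rfl, ?_⟩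
    simpa [ha, Fintype.sum_option, subMDP, hs] using h

theorem sub_sum_in {s : S} (hs : s ∈ H.part i) {a : A} (ha : σs i (some s) = some a)
    (f : Option S → ℝ) :
    ∑ x, (H.subMDP i).stepOf (σs i) (some s) x * f x = ∑ t, H.P s a t * f (some t) := by
  simp [Fintype.sum_option, MDP.stepOf, subMDP, ha, hs]

theorem sub_sum_none (hσ : (H.subMDP i).IsPolicy (σs i)) (f : Option S → ℝ) :
    ∑ x, (H.subMDP i).stepOf (σs i) none x * f x = f none := by
  have h := hσ none
  cases ha : σs i none with
  | none => simp [Fintype.sum_option, MDP.stepOf, subMDP, ha]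
  | some a => simp [ha, subMDP] at h

theorem sub_sum_out (hσ : (H.subMDP i).IsPolicy (σs i)) {s : S} (hs : s ∉ H.part i)
    (f : Option S → ℝ) :
    ∑ x, (H.subMDP i).stepOf (σs i) (some s) x * f x = f none := by
  have h := hσ (some s)
  cases ha : σs i (some s) with
  | none => simp [Fintype.sum_option, MDP.stepOf, subMDP, ha, hs]
  | some a => simp [ha, Fintype.sum_option, subMDP, hs] at h

theorem sub_nonneg (hM : H.toMDP.IsMDP) (x y : Option S) :
    0 ≤ (H.subMDP i).stepOf (σs i) x y := by
  unfold MDP.stepOf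
  generalize σs i x = a
  cases x <;> cases a <;> cases y <;> simp only [subMDP] <;> (try split_ifs) <;>
    first | exact le_rfl | exact zero_le_one | exact hM.1 _ _ _

theorem sub_rew_nonneg (hM : H.toMDP.IsMDP) (x : Option S) : 0 ≤ (H.subMDP i).r x := by
  cases x <;> simp only [subMDP] <;> (try split_ifs) <;>
    first | exact le_rfl | exact hM.2.2 _

theorem sub_row (hM : H.toMDP.IsMDP) (hσ : (H.subMDP i).IsPolicy (σs i)) (x : Option S) :
    ∑ y, (H.subMDP i).stepOf (σs i) x y = 1 := by
  have key : ∑ y, (H.subMDP i).stepOf (σs i) x y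
      = ∑ y, (H.subMDP i).stepOf (σs i) x y * (fun _ => (1 : ℝ)) y := by simp
  rw [key]
  cases x with
  | none => exact sub_sum_none hσ _
  | some s =>
    by_cases hs : s ∈ H.part i
    · obtain ⟨a, ha, hne⟩ := sub_action_in hσ hs
      rw [sub_sum_in hs ha]
      simpa using (hM.2.1 s a).resolve_left hne
    · exact sub_sum_out hσ hs _

theorem sub_reach_none (hσ : (H.subMDP i).IsPolicy (σs i)) (j : Fin Y) :
    (H.subMDP i).PrR (σs i) {some (H.suc i j)} none = 0 := by
  have h : ∀ n, MDP.hitAt ((H.subMDP i).stepOf (σs i)) {some (H.suc i j)} n none = 0 := by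
    intro n
    induction n with
    | zero => simp [MDP.hitAt]
    | succ n ih =>
      simp only [MDP.hitAt]
      rw [sub_sum_none hσ (MDP.hitAt _ _ n)]
      simp [ih]
  simp [MDP.PrR, MDP.reach, h]

theorem sub_reach_out (hM : H.toMDP.IsMDP) (hσ : (H.subMDP i).IsPolicy (σs i)) (j : Fin Y)
    {s : S} (hs : s ∉ H.part i) :
    (H.subMDP i).PrR (σs i) {some (H.suc i j)} (some s) = if s = H.suc i j then 1 else 0 := by
  split_ifs with h
  · exact reach_of_mem (by simp [h])
  · rw [MDP.PrR, reach_of_notMem (sub_nonneg hM) (sub_row hM hσ) (by simpa using h),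
      sub_sum_out hσ hs]
    exact sub_reach_none hσ j

theorem sub_reach_in (hM : H.toMDP.IsMDP) (hσ : (H.subMDP i).IsPolicy (σs i)) (j : Fin Y)
    (hsuc : H.suc i j ∉ H.part i) {s : S} (hs : s ∈ H.part i) {a : A}
    (ha : σs i (some s) = some a) :
    (H.subMDP i).PrR (σs i) {some (H.suc i j)} (some s)
      = ∑ t, H.P s a t * (H.subMDP i).PrR (σs i) {some (H.suc i j)} (some t) := by
  have hne : s ≠ H.suc i j := fun h => hsuc (h ▸ hs)
  rw [MDP.PrR, reach_of_notMem (sub_nonneg hM) (sub_row hM hσ) (by simpa using hne),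
    sub_sum_in hs ha]
  rfl

theorem sub_ER_eq (hM : H.toMDP.IsMDP) (hσ : (H.subMDP i).IsPolicy (σs i))
    (hT : ∀ x, (H.subMDP i).PrR (σs i) {none} x = 1) (x : Option S) :
    (H.subMDP i).ER (σs i) x = if x = none then 0 else (H.subMDP i).r x +
      ∑ y, (H.subMDP i).stepOf (σs i) x y * (H.subMDP i).ER (σs i) y := by
  have h := expRew_eq (sub_nonneg (i := i) (σs := σs) hM) (sub_rew_nonneg (i := i) hM)
    (bddAbove_erN (T := {none}) (sub_nonneg hM) (sub_row hM hσ) (sub_rew_nonneg hM) hT) x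
  by_cases hx : x = none
  · rw [if_pos hx]; exact h.trans (if_pos hx)
  · rw [if_neg hx]; exact h.trans (if_neg hx)

theorem sub_ER_out (hM : H.toMDP.IsMDP) (hσ : (H.subMDP i).IsPolicy (σs i))
    (hT : ∀ x, (H.subMDP i).PrR (σs i) {none} x = 1) {s : S} (hs : s ∉ H.part i) :
    (H.subMDP i).ER (σs i) (some s) = 0 := by
  rw [sub_ER_eq hM hσ hT, if_neg (by simp), sub_sum_out hσ hs, sub_ER_eq hM hσ hT]
  simp [subMDP, hs]

theorem sub_ER_in (hM : H.toMDP.IsMDP) (hσ : (H.subMDP i).IsPolicy (σs i))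
    (hT : ∀ x, (H.subMDP i).PrR (σs i) {none} x = 1) {s : S} (hs : s ∈ H.part i) {a : A}
    (ha : σs i (some s) = some a) :
    (H.subMDP i).ER (σs i) (some s)
      = H.r s + ∑ t, H.P s a t * (H.subMDP i).ER (σs i) (some t) := by
  rw [sub_ER_eq hM hσ hT, if_neg (by simp), sub_sum_in hs ha]
  simp [subMDP, hs]

/-- At a successor state, the sum over all successors collapses to the value there. -/
theorem sub_sum_reach_suc (hM : H.toMDP.IsMDP) (hσ : (H.subMDP i).IsPolicy (σs i))
    (hinj : Function.Injective (H.suc i)) (hsuc : ∀ j, H.suc i j ∉ H.part i)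
    (v : S → ℝ) (j : Fin Y) :
    ∑ k, (H.subMDP i).PrR (σs i) {some (H.suc i k)} (some (H.suc i j)) * v (H.suc i k)
      = v (H.suc i j) := by
  rw [Finset.sum_eq_single j]
  · rw [sub_reach_out hM hσ j (hsuc j)]; simp
  · intro k _ hk
    rw [sub_reach_out hM hσ k (hsuc j), if_neg (fun h => hk (hinj h).symm), zero_mul]
  · simp

/-- Decomposition of a solution `v` of a Bellman equation with rewards `c` on a partition:
it is the reward `W` collected inside the partition plus the values of `v` at the exit states
weighted by the exit probabilities. Both sides solve the same linear system on the subMDP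
chain, whose bottom state is reached almost surely. -/
theorem sub_decompose (hM : H.toMDP.IsMDP) (hσ : (H.subMDP i).IsPolicy (σs i))
    (hT : ∀ x, (H.subMDP i).PrR (σs i) {none} x = 1)
    (hinj : Function.Injective (H.suc i)) (hsuc : ∀ j, H.suc i j ∉ H.part i)
    (hcov : ∀ t ∈ H.succSet i, ∃ j, H.suc i j = t)
    (c v W : S → ℝ) (hWout : ∀ s, s ∉ H.part i → W s = 0)
    (hW : ∀ s ∈ H.part i, ∀ a, σs i (some s) = some a → W s = c s + ∑ t, H.P s a t * W t)
    (hv : ∀ s ∈ H.part i, ∀ a, σs i (some s) = some a → v s = c s + ∑ t, H.P s a t * v t)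
    {s : S} (hs : s ∈ H.part i) :
    v s = W s + ∑ j, (H.subMDP i).PrR (σs i) {some (H.suc i j)} (some s) * v (H.suc i j) := by
  set h : Fin Y → S → ℝ := fun j t => (H.subMDP i).PrR (σs i) {some (H.suc i j)} (some t)
    with hh
  set U : S → ℝ := fun t => W t + ∑ j, h j t * v (H.suc i j) with hU
  let D : Option S → ℝ := fun x =>
    match x with
    | none => 0
    | some t => if t ∈ H.part i then v t - U t else 0
  have hD : killedOp ((H.subMDP i).stepOf (σs i)) {none} D = D := by
    funext x
    rw [killedOp_apply]
    cases x with
    | none => simp [D]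
    | some t =>
      rw [if_neg (by simp)]
      by_cases ht : t ∈ H.part i
      · obtain ⟨a, ha, -⟩ := sub_action_in hσ ht
        rw [sub_sum_in ht ha]
        have hUt : U t = c t + ∑ u, H.P t a u * U u := by
          simp only [hU]
          rw [hW t ht a ha]
          have : ∀ j, h j t = ∑ u, H.P t a u * h j u := fun j =>
            sub_reach_in hM hσ j (hsuc j) ht ha
          simp only [mul_add, Finset.sum_add_distrib, Finset.mul_sum]
          rw [Finset.sum_comm, add_assoc]
          congr 2
          refine Finset.sum_congr rfl fun j _ => ?_
          rw [this j, Finset.sum_mul]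
          simp only [mul_assoc]
        have hDt : D (some t) = v t - U t := by simp [D, ht]
        rw [hDt, hv t ht a ha, hUt, add_sub_add_left_eq_sub, ← Finset.sum_sub_distrib]
        refine Finset.sum_congr rfl fun u _ => ?_
        by_cases hu : u ∈ H.part i
        · simp [D, hu, mul_sub]
        · by_cases hP : H.P t a u = 0
          · simp [hP]
          · obtain ⟨j, rfl⟩ := hcov u ⟨hu, t, ht, a, hP⟩
            have : U (H.suc i j) = v (H.suc i j) := by
              simp only [hU, hh]
              rw [hWout _ hu, sub_sum_reach_suc hM hσ hinj hsuc, zero_add]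
            simp [D, hu, this]
      · rw [sub_sum_out hσ ht]
        simp [D, ht]
  have h0 := congrFun (eq_zero_of_killedOp_fixed (sub_nonneg hM) (sub_row hM hσ) hT hD) (some s)
  simp only [D, hs, if_true, Pi.zero_apply] at h0
  exact sub_eq_zero.1 h0

/-! ### Policies that follow the local policies -/

/-- `σ` is a policy of `H` that plays the local policies `σs` on every nontrivial partition. -/
def Follows (H : HMDP S A ι Y) (σs : ι → Option S → Option A) (σ : S → A) : Prop :=
  H.toMDP.IsPolicy σ ∧ ∀ i, ∀ s ∈ H.part i, σs i (some s) = some (σ s)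

theorem choose_part (hH : H.IsHMDP) {s : S} (hs : s ∈ H.part i)
    (h : ∃ k, s ∈ H.part k) : h.choose = i := by
  by_contra hne
  exact Finset.disjoint_left.1 (hH.1 _ _ hne) h.choose_spec hs

theorem liftPolicy_in (hH : H.IsHMDP) {s : S} (hs : s ∈ H.part i) :
    H.liftPolicy σs s = σs i (some s) := by
  have h : ∃ k, s ∈ H.part k := ⟨i, hs⟩
  rw [liftPolicy, dif_pos h, choose_part hH hs h]

theorem liftPolicy_out {s : S} (hs : ¬ ∃ k, s ∈ H.part k) : H.liftPolicy σs s = none := by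
  rw [liftPolicy, dif_neg hs]

theorem follows_of_restrict (hH : H.IsHMDP) (hσs : H.LocallyOptimal σs) {σ : S → A}
    (hσ : (H.toMDP.restrict (H.liftPolicy σs)).IsPolicy σ) : H.Follows σs σ := by
  have hin : ∀ i, ∀ s ∈ H.part i, σs i (some s) = some (σ s) := by
    intro i s hs
    obtain ⟨a, ha, -⟩ := sub_action_in (hσs i).1 hs
    have h := hσ s
    by_cases hne : σ s = a
    · rw [ha, hne]
    · simp [MDP.restrict, liftPolicy_in hH hs, ha, hne] at h
  refine ⟨fun s => ?_, hin⟩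
  have h := hσ s
  by_cases hs : ∃ i, s ∈ H.part i
  · obtain ⟨i, hi⟩ := hs
    simpa [MDP.restrict, liftPolicy_in hH hi, hin i s hi] using h
  · simpa [MDP.restrict, liftPolicy_out hs] using h

theorem restrict_stepOf (hH : H.IsHMDP) {σ : S → A} (hσ : H.Follows σs σ) :
    (H.toMDP.restrict (H.liftPolicy σs)).stepOf σ = H.toMDP.stepOf σ := by
  funext s t
  by_cases hs : ∃ i, s ∈ H.part i
  · obtain ⟨i, hi⟩ := hs
    simp [MDP.stepOf, MDP.restrict, liftPolicy_in hH hi, hσ.2 i s hi]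
  · simp [MDP.stepOf, MDP.restrict, liftPolicy_out hs]

theorem restrict_isPolicy (hH : H.IsHMDP) {σ : S → A} (hσ : H.Follows σs σ) :
    (H.toMDP.restrict (H.liftPolicy σs)).IsPolicy σ := by
  intro s
  have h : ∑ t, (H.toMDP.restrict (H.liftPolicy σs)).stepOf σ s t ≠ 0 := by
    rw [restrict_stepOf hH hσ]
    exact hσ.1 s
  exact h

theorem restrict_ER (hH : H.IsHMDP) {σ : S → A} (hσ : H.Follows σs σ) (s : S) :
    (H.toMDP.restrict (H.liftPolicy σs)).ER σ s = H.toMDP.ER σ s := by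
  unfold MDP.ER
  rw [restrict_stepOf hH hσ]
  rfl

/-! ### The macro-MDP -/

theorem macro_sum_in (hH : H.IsHMDP) {s : S} (hs : s ∈ H.part i) (σ : S → A) (f : S → ℝ) :
    ∑ t, (H.macroMDP σs).stepOf σ s t * f t = ∑ j, H.resP σs i j * f (H.suc i j) := by
  have h : ∃ k, s ∈ H.part k := ⟨i, hs⟩
  have hc := choose_part hH hs h
  simp only [MDP.stepOf, macroMDP, dif_pos h]
  rw [hc]
  simp only [Finset.sum_mul]
  rw [Finset.sum_comm]
  simp [ite_mul]

theorem macro_stepOf_out {s : S} (hs : ¬ ∃ k, s ∈ H.part k) (σ : S → A) (t : S) :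
    (H.macroMDP σs).stepOf σ s t = H.P s (σ s) t := by
  simp only [MDP.stepOf, macroMDP, dif_neg hs]

theorem macro_r_in (hH : H.IsHMDP) {s : S} (hs : s ∈ H.part i) :
    (H.macroMDP σs).r s = H.resE i := by
  have h : ∃ k, s ∈ H.part k := ⟨i, hs⟩
  simp only [macroMDP, dif_pos h]
  rw [choose_part hH hs h]

theorem macro_r_out {s : S} (hs : ¬ ∃ k, s ∈ H.part k) : (H.macroMDP σs).r s = H.r s := by
  simp only [macroMDP, dif_neg hs]

theorem resP_nonneg (hM : H.toMDP.IsMDP) (j : Fin Y) : 0 ≤ H.resP σs i j :=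
  reach_nonneg (sub_nonneg hM) _

theorem resE_nonneg (hM : H.toMDP.IsMDP) (hσs : H.LocallyOptimal σs) : 0 ≤ H.resE i := by
  rw [resE, ← (hσs i).2]
  exact expRew_nonneg (sub_nonneg hM) (sub_rew_nonneg hM) _

theorem macro_nonneg (hM : H.toMDP.IsMDP) (σ : S → A) (s t : S) :
    0 ≤ (H.macroMDP σs).stepOf σ s t := by
  simp only [MDP.stepOf, macroMDP]
  split_ifs with h
  · exact Finset.sum_nonneg fun j _ => by
      split_ifs
      · exact resP_nonneg hM j
      · exact le_rfl
  · exact hM.1 _ _ _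

theorem macro_r_nonneg (hM : H.toMDP.IsMDP) (hσs : H.LocallyOptimal σs) (s : S) :
    0 ≤ (H.macroMDP σs).r s := by
  simp only [macroMDP]
  split_ifs with h
  · exact resE_nonneg hM hσs
  · exact hM.2.2 s

/-- The exit probabilities of a partition sum to `1`. -/
theorem sum_resP (hM : H.toMDP.IsMDP) (hH : H.IsHMDP) (hσs : H.LocallyOptimal σs)
    (hT : ∀ x, (H.subMDP i).PrR (σs i) {none} x = 1) : ∑ j, H.resP σs i j = 1 := by
  obtain ⟨-, -, hentry, -, -, hsuc, -⟩ := hH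
  have h := sub_decompose hM (hσs i).1 hT (hsuc i).1 (hsuc i).2.1 (hsuc i).2.2
    (fun _ => 0) (fun _ => 1) (fun _ => 0) (fun _ _ => rfl) (fun s _ a _ => by simp)
    (fun s hs a ha => by
      obtain ⟨b, hb, hne⟩ := sub_action_in (hσs i).1 hs
      obtain rfl : b = a := Option.some.inj (hb.symm.trans ha)
      simpa using ((hM.2.1 s b).resolve_left hne).symm) (hentry i)
  simpa [resP] using h.symm

theorem macro_isPolicy (hM : H.toMDP.IsMDP) (hH : H.IsHMDP) (hσs : H.LocallyOptimal σs)
    (hTs : ∀ i x, (H.subMDP i).PrR (σs i) {none} x = 1) {σ : S → A} (hσ : H.Follows σs σ) :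
    (H.macroMDP σs).IsPolicy σ := by
  intro s
  show ∑ t, (H.macroMDP σs).stepOf σ s t ≠ 0
  by_cases hs : ∃ i, s ∈ H.part i
  · obtain ⟨i, hi⟩ := hs
    have h := macro_sum_in (σs := σs) hH hi σ (fun _ => 1)
    simp only [mul_one, sum_resP hM hH hσs (hTs i)] at h
    rw [h]
    exact one_ne_zero
  · simp only [macro_stepOf_out hs]
    exact hσ.1 s

/-- A macro policy may be changed to follow the local policies without changing its chain,
because the macro-MDP ignores the chosen action inside nontrivial partitions. -/
theorem exists_follows_of_macro (hH : H.IsHMDP) (hσs : H.LocallyOptimal σs) {σ : S → A}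
    (hσ : (H.macroMDP σs).IsPolicy σ) :
    ∃ τ, H.Follows σs τ ∧ (H.macroMDP σs).stepOf τ = (H.macroMDP σs).stepOf σ := by
  have hex : ∀ s, ∃ a, (∑ t, H.P s a t ≠ 0) ∧ (∀ i, s ∈ H.part i → σs i (some s) = some a) ∧
      ((¬ ∃ i, s ∈ H.part i) → a = σ s) := by
    intro s
    by_cases hs : ∃ i, s ∈ H.part i
    · obtain ⟨i, hi⟩ := hs
      obtain ⟨a, ha, hne⟩ := sub_action_in (hσs i).1 hi
      refine ⟨a, hne, fun k hk => ?_, fun h => absurd ⟨i, hi⟩ h⟩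
      have h : ∃ k, s ∈ H.part k := ⟨i, hi⟩
      rw [← choose_part hH hk h, choose_part hH hi h, ha]
    · refine ⟨σ s, ?_, fun i hi => absurd ⟨i, hi⟩ hs, fun _ => rfl⟩
      have h : ∑ t, (H.macroMDP σs).stepOf σ s t ≠ 0 := hσ s
      simpa only [macro_stepOf_out hs] using h
  choose τ h1 h2 h3 using hex
  refine ⟨τ, ⟨h1, fun i s hs => h2 s i hs⟩, ?_⟩
  funext s t
  by_cases hs : ∃ i, s ∈ H.part i
  · simp only [MDP.stepOf, macroMDP, dif_pos hs]
  · rw [macro_stepOf_out hs, macro_stepOf_out hs, h3 s hs]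

/-- A transition into a nontrivial partition from outside leads to its entry state. -/
theorem eq_entry_of_step (hH : H.IsHMDP) {s t : S} {a : A} (hP : H.P s a t ≠ 0)
    (hs : s ∉ H.part i) (ht : t ∈ H.part i) : t = H.entry i := by
  by_contra hne
  exact hs ((hH.2.2.2.2.1 i t ht hne).2 s a hP)

/-- The collapse map: a state of a nontrivial partition is sent to the entry of that
partition, a trivial state to itself. -/
noncomputable def collapse (H : HMDP S A ι Y) (s : S) : S :=
  if h : ∃ i, s ∈ H.part i then H.entry h.choose else s

theorem collapse_in (hH : H.IsHMDP) {s : S} (hs : s ∈ H.part i) :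
    H.collapse s = H.entry i := by
  have h : ∃ k, s ∈ H.part k := ⟨i, hs⟩
  rw [collapse, dif_pos h, choose_part hH hs h]

theorem collapse_out {s : S} (hs : ¬ ∃ k, s ∈ H.part k) : H.collapse s = s := by
  rw [collapse, dif_neg hs]

/-- A state entered from another partition, or from a trivial state, is its own collapse. -/
theorem collapse_of_step (hH : H.IsHMDP) {s t : S} {a : A} (hP : H.P s a t ≠ 0)
    (hst : ∀ k, t ∈ H.part k → s ∉ H.part k) : H.collapse t = t := by
  by_cases ht : ∃ k, t ∈ H.part k
  · obtain ⟨k, hk⟩ := ht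
    rw [collapse_in hH hk]
    exact (eq_entry_of_step hH hP (hst k hk) hk).symm
  · exact collapse_out ht

section Value

variable {σ : S → A}

theorem step_row (hM : H.toMDP.IsMDP) (hσ : H.Follows σs σ) (s : S) :
    ∑ t, H.toMDP.stepOf σ s t = 1 :=
  (hM.2.1 s (σ s)).resolve_left (hσ.1 s)

theorem ER_eq (hM : H.toMDP.IsMDP) (hσ : H.Follows σs σ)
    (hT : ∀ s, H.toMDP.PrR σ H.target s = 1) (s : S) :
    H.toMDP.ER σ s = if s ∈ H.target then 0 else
      H.r s + ∑ t, H.toMDP.stepOf σ s t * H.toMDP.ER σ t :=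
  expRew_eq (fun _ _ => hM.1 _ _ _) hM.2.2
    (bddAbove_erN (fun _ _ => hM.1 _ _ _) (step_row hM hσ) hM.2.2 hT) s

/-- The value of `σ` in `H`, read off at the entry of each partition, solves the Bellman
equation of the macro-MDP. -/
theorem collapse_solves_macro (hM : H.toMDP.IsMDP) (hH : H.IsHMDP) (hσs : H.LocallyOptimal σs)
    (hTs : ∀ i x, (H.subMDP i).PrR (σs i) {none} x = 1) (hσ : H.Follows σs σ)
    (hT : ∀ s, H.toMDP.PrR σ H.target s = 1) (s : S) (hs : s ∉ H.target) :
    H.toMDP.ER σ (H.collapse s) = (H.macroMDP σs).r s +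
      ∑ t, (H.macroMDP σs).stepOf σ s t * H.toMDP.ER σ (H.collapse t) := by
  have hsuc := hH.2.2.2.2.2.1
  have hentry := hH.2.2.1
  have htar := hH.2.2.2.2.2.2
  by_cases hp : ∃ i, s ∈ H.part i
  · obtain ⟨i, hi⟩ := hp
    rw [collapse_in hH hi, macro_r_in hH hi, macro_sum_in hH hi]
    -- collapsing outside the partition keeps the Bellman equation inside it, and makes the
    -- listed exits that are not actual successors harmless
    have h := sub_decompose hM (hσs i).1 (hTs i) (hsuc i).1 (hsuc i).2.1 (hsuc i).2.2 H.r
      (fun t => if t ∈ H.part i then H.toMDP.ER σ t else H.toMDP.ER σ (H.collapse t))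
      (fun t => (H.subMDP i).ER (σs i) (some t))
      (fun t ht => sub_ER_out hM (hσs i).1 (hTs i) ht)
      (fun t ht a ha => sub_ER_in hM (hσs i).1 (hTs i) ht ha)
      (fun t ht a ha => by
        obtain rfl : σ t = a := Option.some.inj ((hσ.2 i t ht).symm.trans ha)
        rw [if_pos ht, ER_eq hM hσ hT, if_neg (htar i t ht)]
        congr 1
        refine Finset.sum_congr rfl fun u _ => ?_
        by_cases hP : H.P t (σ t) u = 0
        · simp [MDP.stepOf, hP]
        · by_cases hu : u ∈ H.part i
          · simp [MDP.stepOf, hu]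
          · have : H.collapse u = u := collapse_of_step hH hP fun k hk htk => by
              rcases eq_or_ne k i with rfl | hne
              · exact hu hk
              · exact Finset.disjoint_left.1 (hH.1 _ _ hne) htk ht
            simp [MDP.stepOf, hu, this])
      (hentry i)
    simp only [if_pos (hentry i), if_neg ((hsuc i).2.1 _)] at h
    rw [h, (hσs i).2]
    rfl
  · rw [collapse_out hp, macro_r_out hp, ER_eq hM hσ hT, if_neg hs]
    congr 1
    refine Finset.sum_congr rfl fun t _ => ?_
    rw [macro_stepOf_out hp]
    by_cases hP : H.P s (σ s) t = 0
    · simp [MDP.stepOf, hP]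
    · rw [collapse_of_step hH hP fun k _ hk => hp ⟨k, hk⟩]
      rfl

theorem macro_ER_eq (hM : H.toMDP.IsMDP) (hH : H.IsHMDP) (hσs : H.LocallyOptimal σs)
    (hTs : ∀ i x, (H.subMDP i).PrR (σs i) {none} x = 1) (hσ : H.Follows σs σ)
    (hT : ∀ s, H.toMDP.PrR σ H.target s = 1) (s : S) :
    (H.macroMDP σs).ER σ s = if s ∈ H.target then 0 else (H.macroMDP σs).r s +
      ∑ t, (H.macroMDP σs).stepOf σ s t * (H.macroMDP σs).ER σ t := by
  refine expRew_eq (macro_nonneg hM σ) (macro_r_nonneg hM hσs) (fun s => ?_) s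
  refine ⟨H.toMDP.ER σ (H.collapse s), ?_⟩
  rintro _ ⟨n, rfl⟩
  exact erN_le_of_solution (f := fun s => H.toMDP.ER σ (H.collapse s)) (macro_nonneg hM σ)
    (fun s => expRew_nonneg (fun s t => hM.1 _ _ _) hM.2.2 _)
    (collapse_solves_macro hM hH hσs hTs hσ hT) n s

/-- For a policy following the local policies, the macro-MDP and `H` have the same expected
reward at the initial state: the macro value, extended to the interior of each partition by
reward-until-exit plus expected exit value, solves the Bellman equation of `H`. -/
theorem macro_ER_init (hM : H.toMDP.IsMDP) (hH : H.IsHMDP) (hσs : H.LocallyOptimal σs)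
    (hTs : ∀ i x, (H.subMDP i).PrR (σs i) {none} x = 1) (hσ : H.Follows σs σ)
    (hT : ∀ s, H.toMDP.PrR σ H.target s = 1) :
    (H.macroMDP σs).ER σ H.init = H.toMDP.ER σ H.init := by
  have hsuc := hH.2.2.2.2.2.1
  have hentry := hH.2.2.1
  have htar := hH.2.2.2.2.2.2
  set v := (H.macroMDP σs).ER σ with hv
  let U : ι → S → ℝ := fun i s => (H.subMDP i).ER (σs i) (some s)
    + ∑ j, (H.subMDP i).PrR (σs i) {some (H.suc i j)} (some s) * v (H.suc i j)
  let V : S → ℝ := fun s => if h : ∃ i, s ∈ H.part i then U h.choose s else v s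
  have hVin : ∀ i, ∀ s ∈ H.part i, V s = U i s := by
    intro i s hs
    have h : ∃ k, s ∈ H.part k := ⟨i, hs⟩
    simp only [V, dif_pos h]
    rw [choose_part hH hs h]
  have hVout : ∀ s, (¬ ∃ i, s ∈ H.part i) → V s = v s := fun s hs => by
    simp only [V, dif_neg hs]
  have hVentry : ∀ i, V (H.entry i) = v (H.entry i) := by
    intro i
    rw [hVin i _ (hentry i), hv, macro_ER_eq hM hH hσs hTs hσ hT,
      if_neg (htar i _ (hentry i)), macro_r_in hH (hentry i), macro_sum_in hH (hentry i)]
    simp only [U]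
    rw [(hσs i).2]
    rfl
  have hVcol : ∀ s, H.collapse s = s → V s = v s := by
    intro s hs
    by_cases h : ∃ i, s ∈ H.part i
    · obtain ⟨i, hi⟩ := h
      rw [← hs, collapse_in hH hi]
      exact hVentry i
    · exact hVout s h
  have hV : ∀ s, V s = if s ∈ H.target then 0 else
      H.r s + ∑ t, H.toMDP.stepOf σ s t * V t := by
    intro s
    by_cases hp : ∃ i, s ∈ H.part i
    · obtain ⟨i, hi⟩ := hp
      have ha := hσ.2 i s hi
      rw [if_neg (htar i s hi), hVin i s hi]
      have hPU : ∀ t, H.toMDP.stepOf σ s t * V t = H.P s (σ s) t * U i t := by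
        intro t
        show H.P s (σ s) t * V t = H.P s (σ s) t * U i t
        by_cases ht : t ∈ H.part i
        · rw [hVin i t ht]
        · by_cases hP : H.P s (σ s) t = 0
          · simp [hP]
          · have hc : H.collapse t = t := collapse_of_step hH hP fun k hk hsk => by
              rcases eq_or_ne k i with rfl | hne
              · exact ht hk
              · exact Finset.disjoint_left.1 (hH.1 _ _ hne) hsk hi
            rw [hVcol t hc]
            obtain ⟨j, rfl⟩ := (hsuc i).2.2 t ⟨ht, s, hi, _, hP⟩
            simp only [U]
            rw [sub_ER_out hM (hσs i).1 (hTs i) ht,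
              sub_sum_reach_suc hM (hσs i).1 (hsuc i).1 (hsuc i).2.1, zero_add]
      rw [Finset.sum_congr rfl fun t _ => hPU t]
      simp only [U]
      rw [sub_ER_in hM (hσs i).1 (hTs i) hi ha]
      simp only [mul_add, Finset.sum_add_distrib, Finset.mul_sum]
      rw [Finset.sum_comm, add_assoc]
      congr 2
      refine Finset.sum_congr rfl fun j _ => ?_
      rw [sub_reach_in hM (hσs i).1 j ((hsuc i).2.1 j) hi ha, Finset.sum_mul]
      simp only [mul_assoc]
    · rw [hVout s hp, hv, macro_ER_eq hM hH hσs hTs hσ hT, macro_r_out hp]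
      split_ifs with hs
      · rfl
      · congr 1
        refine Finset.sum_congr rfl fun t _ => ?_
        rw [macro_stepOf_out hp]
        by_cases hP : H.P s (σ s) t = 0
        · simp [MDP.stepOf, hP]
        · rw [hVcol t (collapse_of_step hH hP fun k _ hk => hp ⟨k, hk⟩)]
          rfl
  have hEq : V = H.toMDP.ER σ :=
    solution_unique (fun _ _ => hM.1 _ _ _) (step_row hM hσ) hT hV (ER_eq hM hσ hT)
  have hinit : H.collapse H.init = H.init := by
    by_cases h : ∃ i, H.init ∈ H.part i
    · obtain ⟨i, hi⟩ := h
      rw [collapse_in hH hi]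
      by_contra hne
      exact (hH.2.2.2.2.1 i _ hi (Ne.symm hne)).1 rfl
    · exact collapse_out h
  rw [← hEq, hVcol _ hinit]

end Value

end HMDP

/-- **Theorem 1.**  Let `M` be a hierarchical MDP with target states `T` that has
optimal local subpolicies, and let `macro(M)` be the corresponding macro-MDP
(built from a fixed family `σs` of locally optimal subMDP policies).  Then
`maxER_{macro(M)}(◊T) = maxER_M(◊T)`. -/
theorem macroMDP_maxER_eq
    {S A ι : Type} {Y : ℕ} [Fintype S] [Fintype A] [Fintype ι]
    (H : HMDP S A ι Y) (hM : H.toMDP.IsMDP) (hH : H.IsHMDP)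
    (hT : ∀ σ, H.toMDP.IsPolicy σ → ∀ s, H.toMDP.PrR σ H.target s = 1)
    (hTsub : ∀ i σ, (H.subMDP i).IsPolicy σ → ∀ s, (H.subMDP i).PrR σ {none} s = 1)
    (hopt : H.HasOptimalLocalSubpolicies)
    (σs : ι → Option S → Option A) (hσs : H.LocallyOptimal σs) :
    (H.macroMDP σs).maxER H.init = H.toMDP.maxER H.init := by
  have hTs : ∀ i x, (H.subMDP i).PrR (σs i) {none} x = 1 := fun i => hTsub i _ (hσs i).1
  rw [← hopt σs hσs]
  -- both suprema range over the same set of values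
  refine congrArg sSup (Set.ext fun x => ⟨?_, ?_⟩)
  · rintro ⟨⟨σ, hσ⟩, rfl⟩
    obtain ⟨τ, hτ, hstep⟩ := HMDP.exists_follows_of_macro hH hσs hσ
    refine ⟨⟨τ, HMDP.restrict_isPolicy hH hτ⟩, ?_⟩
    have h : (H.macroMDP σs).ER σ H.init = (H.macroMDP σs).ER τ H.init := by
      unfold MDP.ER
      rw [hstep]
    show (H.toMDP.restrict (H.liftPolicy σs)).ER τ H.init = (H.macroMDP σs).ER σ H.init
    rw [h, HMDP.restrict_ER hH hτ, HMDP.macro_ER_init hM hH hσs hTs hτ (hT τ hτ.1)]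
  · rintro ⟨⟨σ, hσ⟩, rfl⟩
    have hf := HMDP.follows_of_restrict hH hσs hσ
    refine ⟨⟨σ, HMDP.macro_isPolicy hM hH hσs hTs hf⟩, ?_⟩
    show (H.macroMDP σs).ER σ H.init = (H.toMDP.restrict (H.liftPolicy σs)).ER σ H.init
    rw [HMDP.restrict_ER hH hf, HMDP.macro_ER_init hM hH hσs hTs hf (hT σ hf.1)]
end

section
/- Let M_i be the subMDP of a nontrivial partition S_i of a hierarchical MDP, and suppose the partition has a single successor state, i.e., succ(S_i) \ S_i = {s'}. Then for every memoryless policy σ of M_i, the probability of reaching s' equals 1: Pr_{M_i[σ]}(◊{s'}) = 1. Consequently, the transition probabilities of the macro-MDP at entry_i do not depend on the choice of the optimal policy σ_i. -/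
/-!
From a state of `part i` the subMDP cannot move directly to `⊥`: the run stays inside the
partition or moves to the unique successor `s'`, and from `s'` the next step leads to `⊥` with
probability 1. Inside the partition, the first visit to `⊥` therefore happens exactly one step
after the first visit to `s'`, i.e. the two first-hitting distributions agree up to a shift by one
(`HMDP.hitAt_bot_succ`). Summing over all times, `Pr(◊{s'}) = Pr(◊{⊥}) = 1`.

The set `part i ∪ {s', ⊥}` is closed under transitions, so an enumerated state `suc i j` other
than `s'` is reached with probability 0 under every policy (`HMDP.hitAt_other`). Both values are
independent of the policy.
-/


open scoped BigOperators
open scoped Classical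

namespace HMDP

variable {S A ι : Type} {Y : ℕ} [Fintype S] [Fintype A] [Fintype ι]

/-- Outside the partition only the fresh action is enabled. -/
theorem policy_outside (H : HMDP S A ι Y) (i : ι) {σ : Option S → Option A}
    (hσ : (H.subMDP i).IsPolicy σ) {x : S} (hx : x ∉ H.part i) : σ (some x) = none := by
  have h := hσ (some x)
  rcases hs : σ (some x) with _ | a
  · rfl
  · exact absurd (by simp [hs, subMDP, Fintype.sum_option, hx]) h

theorem step_outside_some (H : HMDP S A ι Y) (i : ι) {σ : Option S → Option A}
    (hσ : (H.subMDP i).IsPolicy σ) {x : S} (hx : x ∉ H.part i) (t : S) :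
    (H.subMDP i).stepOf σ (some x) (some t) = 0 := by
  simp [MDP.stepOf, policy_outside H i hσ hx, subMDP]

theorem step_outside_bot (H : HMDP S A ι Y) (i : ι) {σ : Option S → Option A}
    (hσ : (H.subMDP i).IsPolicy σ) {x : S} (hx : x ∉ H.part i) :
    (H.subMDP i).stepOf σ (some x) none = 1 := by
  simp [MDP.stepOf, policy_outside H i hσ hx, subMDP, hx]

theorem step_inside_bot (H : HMDP S A ι Y) (i : ι) (σ : Option S → Option A)
    {x : S} (hx : x ∈ H.part i) : (H.subMDP i).stepOf σ (some x) none = 0 := by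
  rcases hs : σ (some x) with _ | a <;> simp [MDP.stepOf, hs, subMDP, hx]

theorem step_bot_some (H : HMDP S A ι Y) (i : ι) (σ : Option S → Option A) (t : S) :
    (H.subMDP i).stepOf σ none (some t) = 0 := by
  rcases hs : σ none with _ | a <;> simp [MDP.stepOf, hs, subMDP]

theorem step_inside_some (H : HMDP S A ι Y) (i : ι) (σ : Option S → Option A) {s' : S}
    (hsingle : H.succSet i = {s'}) {x t : S} (hx : x ∈ H.part i)
    (ht : t ∉ H.part i) (hts : t ≠ s') : (H.subMDP i).stepOf σ (some x) (some t) = 0 := by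
  rcases hs : σ (some x) with _ | a
  · simp [MDP.stepOf, hs, subMDP]
  · by_contra hne
    have hmem : t ∈ H.succSet i := ⟨ht, x, hx, a, by simpa [MDP.stepOf, hs, subMDP, hx] using hne⟩
    rw [hsingle] at hmem
    exact hts hmem

/-- The first visit to `⊥` occurs exactly one step after the first visit to `s'`. -/
theorem hitAt_bot_succ (H : HMDP S A ι Y) (i : ι) {s' : S} (hsingle : H.succSet i = {s'})
    {σ : Option S → Option A} (hσ : (H.subMDP i).IsPolicy σ) (n : ℕ) :
    ∀ x : S, x ∈ H.part i ∨ x = s' →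
      MDP.hitAt ((H.subMDP i).stepOf σ) {none} (n + 1) (some x) =
        MDP.hitAt ((H.subMDP i).stepOf σ) {some s'} n (some x) := by
  have hs' : s' ∉ H.part i := by
    have : s' ∈ H.succSet i := by rw [hsingle]; rfl
    exact this.1
  induction n with
  | zero =>
    rintro x (hx | rfl)
    · have hxs : x ≠ s' := fun h => hs' (h ▸ hx)
      simp [MDP.hitAt, Fintype.sum_option, step_inside_bot H i σ hx, hxs]
    · simp [MDP.hitAt, Fintype.sum_option, step_outside_bot H i hσ hs']
  | succ n ih =>
    rintro x (hx | rfl)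
    · have hxs : x ≠ s' := fun h => hs' (h ▸ hx)
      rw [MDP.hitAt, MDP.hitAt, if_neg (by simp), if_neg (by simpa using hxs),
        Fintype.sum_option, Fintype.sum_option, step_inside_bot H i σ hx, zero_mul, zero_mul]
      congr 1
      refine Finset.sum_congr rfl fun t _ => ?_
      by_cases ht : t ∈ H.part i ∨ t = s'
      · rw [ih t ht]
      · rw [not_or] at ht
        rw [step_inside_some H i σ hsingle hx ht.1 ht.2, zero_mul, zero_mul]
    · rw [MDP.hitAt, if_neg (by simp), Fintype.sum_option]
      simp [MDP.hitAt, step_outside_some H i hσ hs']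

/-- A state outside the closed set `part i ∪ {s', ⊥}` is never visited from within that set. -/
theorem hitAt_other (H : HMDP S A ι Y) (i : ι) {s' : S} (hsingle : H.succSet i = {s'})
    {σ : Option S → Option A} (hσ : (H.subMDP i).IsPolicy σ) {u : S}
    (hu : u ∉ H.part i) (hus : u ≠ s') (n : ℕ) :
    MDP.hitAt ((H.subMDP i).stepOf σ) {some u} n none = 0 ∧
      ∀ x : S, x ∈ H.part i ∨ x = s' →
        MDP.hitAt ((H.subMDP i).stepOf σ) {some u} n (some x) = 0 := by
  have hs' : s' ∉ H.part i := by
    have : s' ∈ H.succSet i := by rw [hsingle]; rfl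
    exact this.1
  have hne : ∀ x : S, x ∈ H.part i ∨ x = s' → x ≠ u := by
    rintro x (hx | rfl) rfl
    · exact hu hx
    · exact hus rfl
  induction n with
  | zero => exact ⟨by simp [MDP.hitAt], fun x hx => by simp [MDP.hitAt, hne x hx]⟩
  | succ n ih =>
    refine ⟨?_, fun x hx => ?_⟩
    · rw [MDP.hitAt, if_neg (by simp), Fintype.sum_option]
      simp [ih.1, step_bot_some]
    · rw [MDP.hitAt, if_neg (by simpa using hne x hx), Fintype.sum_option, ih.1, mul_zero, zero_add]
      refine Finset.sum_eq_zero fun t _ => ?_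
      by_cases ht : t ∈ H.part i ∨ t = s'
      · rw [ih.2 t ht, mul_zero]
      · rw [not_or] at ht
        rcases hx with hx | rfl
        · rw [step_inside_some H i σ hsingle hx ht.1 ht.2, zero_mul]
        · rw [step_outside_some H i hσ hs', zero_mul]

end HMDP

/-- **Single-successor partitions.**  Let `M_i` be the subMDP of a nontrivial
partition `S_i` of a hierarchical MDP with a single successor state,
`succ(S_i) \ S_i = {s'}`.  Then for every memoryless policy `σ` of `M_i` the
probability of reaching `s'` equals 1, and consequently the transition
probabilities of the macro-MDP at `entry_i` (the reachability probabilities of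
the enumerated successor states) do not depend on the choice of the policy. -/
theorem single_successor_reached_surely
    {S A ι : Type} {Y : ℕ} [Fintype S] [Fintype A] [Fintype ι]
    (H : HMDP S A ι Y) (hM : H.toMDP.IsMDP) (hH : H.IsHMDP)
    (hTsub : ∀ i σ, (H.subMDP i).IsPolicy σ → ∀ s, (H.subMDP i).PrR σ {none} s = 1)
    (i : ι) (s' : S) (hsingle : H.succSet i = {s'}) :
    (∀ σ, (H.subMDP i).IsPolicy σ →
      (H.subMDP i).PrR σ {some s'} (some (H.entry i)) = 1) ∧
    (∀ σ τ, (H.subMDP i).IsPolicy σ → (H.subMDP i).IsPolicy τ → ∀ j : Fin Y,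
      (H.subMDP i).PrR σ {some (H.suc i j)} (some (H.entry i)) =
        (H.subMDP i).PrR τ {some (H.suc i j)} (some (H.entry i))) := by
  have hentry : H.entry i ∈ H.part i := hH.2.2.1 i
  have hone : ∀ σ, (H.subMDP i).IsPolicy σ →
      (H.subMDP i).PrR σ {some s'} (some (H.entry i)) = 1 := by
    intro σ hσ
    have h1 := hTsub i σ hσ (some (H.entry i))
    unfold MDP.PrR MDP.reach at h1 ⊢
    -- The series for `⊥` is summable, since otherwise its `tsum` would be the junk value `0`.
    have hsum : Summable fun n =>
        MDP.hitAt ((H.subMDP i).stepOf σ) {none} n (some (H.entry i)) := by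
      by_contra hns
      rw [tsum_eq_zero_of_not_summable hns] at h1
      exact zero_ne_one h1
    rw [hsum.tsum_eq_zero_add] at h1
    simpa [MDP.hitAt.eq_1, HMDP.hitAt_bot_succ H i hsingle hσ _ _ (Or.inl hentry)] using h1
  refine ⟨hone, fun σ τ hσ hτ j => ?_⟩
  by_cases hj : H.suc i j = s'
  · rw [hj, hone σ hσ, hone τ hτ]
  · have hout : H.suc i j ∉ H.part i := (hH.2.2.2.2.2.1 i).2.1 j
    have hzero : ∀ ρ, (H.subMDP i).IsPolicy ρ →
        (H.subMDP i).PrR ρ {some (H.suc i j)} (some (H.entry i)) = 0 := by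
      intro ρ hρ
      unfold MDP.PrR MDP.reach
      simp [(HMDP.hitAt_other H i hsingle hρ hout hj _).2 _ (Or.inl hentry)]
    rw [hzero σ hσ, hzero τ hτ]
end
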